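/- Let (u_v)_{v≥0} be a sequence of reals with u_0 = 1 such that (Δ^k u)_v ≥ 0 for all k, v ≥ 0, where (Δu)_v = u_v − u_{v+1}. Then there exists a probability measure μ on [0,1] such that u_v = ∫_0^1 x^v dμ(x) for all v ≥ 0 (Hausdorff moment problem). -/

import Mathlib

open MeasureTheory

/-- Forward difference operator `(Δu)_v = u_v - u_{v+1}`. -/
def fdiff (u : ℕ → ℝ) : ℕ → ℝ := fun v => u v - u (v + 1)

open Filter Topology unitInterval

/-- The shift operator. -/
def shiftEnd : Module.End ℝ (ℕ → ℝ) where
  toFun u := fun v => u (v + 1)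
  map_add' _ _ := rfl
  map_smul' _ _ := rfl

lemma shiftEnd_pow (j : ℕ) (u : ℕ → ℝ) (v : ℕ) : (shiftEnd ^ j) u v = u (v + j) := by
  induction j generalizing u v with
  | zero => simp
  | succ j ih =>
    rw [pow_succ, Module.End.mul_apply, ih]
    rfl

lemma fdiff_iter (k : ℕ) (u : ℕ → ℝ) : ((1 - shiftEnd) ^ k) u = fdiff^[k] u := by
  rw [Module.End.pow_apply]
  rfl

lemma sum_fdiff (u : ℕ → ℝ) (m v : ℕ) :
    ∑ j ∈ Finset.range (m + 1), (m.choose j : ℝ) * (fdiff^[m - j] u) (v + j) = u v := by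
  have hc : Commute shiftEnd (1 - shiftEnd) :=
    (Commute.one_right _).sub_right (Commute.refl _)
  have h := hc.add_pow m
  rw [add_sub_cancel, one_pow] at h
  have h2 := congrFun (congrArg (fun f : Module.End ℝ (ℕ → ℝ) => f u) h) v
  simp only [Module.End.one_apply, LinearMap.sum_apply, Finset.sum_apply] at h2
  rw [h2]
  refine Finset.sum_congr rfl fun j _ => ?_
  rw [← Nat.cast_comm, ← nsmul_eq_mul (m.choose j) (shiftEnd ^ j * _), LinearMap.smul_apply,
    Module.End.mul_apply, Pi.smul_apply, shiftEnd_pow, fdiff_iter, nsmul_eq_mul]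

/-- Weights. -/
noncomputable def wt (u : ℕ → ℝ) (n k : ℕ) : ℝ := (n.choose k : ℝ) * (fdiff^[n - k] u) k

lemma sum_wt (u : ℕ → ℝ) (n v : ℕ) (h : v ≤ n) :
    ∑ k ∈ Finset.range (n + 1), wt u n k * ((k.choose v : ℝ) / n.choose v) = u v := by
  obtain ⟨m, rfl⟩ := Nat.exists_eq_add_of_le h
  rw [add_assoc, Finset.sum_range_add, Finset.sum_eq_zero, zero_add]
  · rw [← sum_fdiff u m v]
    refine Finset.sum_congr rfl fun j hj => ?_
    have hj : j ≤ m := by simpa [Nat.lt_succ_iff] using hj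
    have h1 := Nat.choose_mul (n := v + m) (k := v + j) (s := v) (by omega)
    have h2 : v + m - v = m := by omega
    have h3 : v + j - v = j := by omega
    have h4 : v + m - (v + j) = m - j := by omega
    rw [h2, h3] at h1
    have h1' : ((v+m).choose (v+j) : ℝ) * (v+j).choose v = (v+m).choose v * m.choose j := by
      exact_mod_cast h1
    have h5 : ((v+m).choose v : ℝ) ≠ 0 := by
      exact_mod_cast (Nat.choose_pos h).ne'
    unfold wt
    rw [h4]
    field_simp
    linear_combination (fdiff^[m - j] u (v + j)) * h1'
  · intro k hk
    rw [Nat.choose_eq_zero_of_lt (Finset.mem_range.1 hk)]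
    simp

lemma ratio_bound (n k N : ℕ) (hk : k ≤ n) (hN : N < n) (v : ℕ) (hv : v ≤ N) :
    |(k.choose v : ℝ) / n.choose v - ((k : ℝ) / n) ^ v| ≤ v * (N / (n - N)) := by
  have hnN : (0 : ℝ) < n - N := by
    have : (N : ℝ) < n := by exact_mod_cast hN
    linarith
  have hn : (0 : ℝ) < n := by exact_mod_cast (by omega : 0 < n)
  have hkn : (k : ℝ) ≤ n := by exact_mod_cast hk
  have ht0 : (0 : ℝ) ≤ (k : ℝ) / n := by positivity
  have ht1 : (k : ℝ) / n ≤ 1 := (div_le_one hn).2 hkn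
  induction v with
  | zero => simp
  | succ v ih =>
    specialize ih (by omega)
    have hvN : (v : ℝ) ≤ N := by exact_mod_cast (by omega : v ≤ N)
    have hnv : (0 : ℝ) < n - v := by linarith
    set q : ℝ := ((k - v : ℕ) : ℝ) / (n - v) with hq
    have e1 : (k.choose (v+1) : ℝ) * (v + 1) = k.choose v * ((k - v : ℕ) : ℝ) := by
      exact_mod_cast Nat.choose_succ_right_eq k v
    have e2 : (n.choose (v+1) : ℝ) * (v + 1) = n.choose v * (n - v) := by
      have := Nat.choose_succ_right_eq n v
      rw [← Nat.cast_sub (by omega)]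
      exact_mod_cast this
    have p1 : (0 : ℝ) < n.choose v := by exact_mod_cast Nat.choose_pos (by omega)
    have p2 : (0 : ℝ) < n.choose (v+1) := by exact_mod_cast Nat.choose_pos (by omega)
    have e3 : (k.choose (v+1) : ℝ) / n.choose (v+1) = k.choose v / n.choose v * q := by
      rw [hq, div_mul_div_comm, ← e1, ← e2]
      field_simp
    have hq0 : 0 ≤ q := by positivity
    have hq1 : q ≤ 1 := by
      rw [hq, div_le_one hnv, ← Nat.cast_sub (by omega)]
      exact_mod_cast (by omega : k - v ≤ n - v)
    have hb : |q - (k : ℝ) / n| ≤ N / (n - N) := by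
      have hc : (v : ℝ) / (n - v) ≤ N / (n - N) := by gcongr
      refine le_trans ?_ hc
      rcases le_total v k with h | h
      · have hvk : (v : ℝ) ≤ k := by exact_mod_cast h
        have : q - (k : ℝ) / n = - ((v / (n - v)) * (1 - k / n)) := by
          rw [hq, Nat.cast_sub h]
          field_simp
          ring
        rw [this, abs_neg, abs_of_nonneg (mul_nonneg (by positivity) (by linarith))]
        exact mul_le_of_le_one_right (by positivity) (by linarith)
      · have : q = 0 := by rw [hq, Nat.sub_eq_zero_of_le h]; simp
        rw [this, zero_sub, abs_neg, abs_of_nonneg ht0]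
        have hvk : (k : ℝ) ≤ v := by exact_mod_cast h
        have : (n : ℝ) - v ≤ n := by
          have : (0 : ℝ) ≤ v := by positivity
          linarith
        gcongr
    have e4 : (k.choose (v+1) : ℝ) / n.choose (v+1) - ((k : ℝ) / n) ^ (v+1)
        = (k.choose v / n.choose v - ((k : ℝ) / n) ^ v) * q + ((k : ℝ) / n) ^ v * (q - k / n) := by
      rw [e3]; ring
    rw [e4]
    refine (abs_add_le _ _).trans ?_
    rw [abs_mul, abs_mul, abs_of_nonneg hq0, abs_of_nonneg (pow_nonneg ht0 v)]
    have a1 := mul_le_of_le_one_right (abs_nonneg ((k.choose v : ℝ) / n.choose v - ((k : ℝ) / n) ^ v)) hq1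
    have a2 := mul_le_of_le_one_left (abs_nonneg (q - (k : ℝ) / n)) (pow_le_one₀ (n := v) ht0 ht1)
    push_cast
    linarith

/-- Approximating measures. -/
noncomputable def appr (u : ℕ → ℝ) (n : ℕ) : Measure I :=
  ∑ k ∈ Finset.range (n + 1), ENNReal.ofReal (wt u n k) •
    Measure.dirac (Set.projIcc (0 : ℝ) 1 zero_le_one ((k : ℝ) / n))

section
variable (u : ℕ → ℝ) (h0 : u 0 = 1) (hmono : ∀ k v : ℕ, 0 ≤ (fdiff^[k] u) v)

lemma wt_nonneg (hmono : ∀ k v : ℕ, 0 ≤ (fdiff^[k] u) v) (n k : ℕ) : 0 ≤ wt u n k :=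
  mul_nonneg (by positivity) (hmono _ _)

lemma sum_wt_one (h0 : u 0 = 1) (n : ℕ) : ∑ k ∈ Finset.range (n + 1), wt u n k = 1 := by
  have := sum_wt u n 0 (by omega)
  simpa [h0] using this

lemma appr_prob (h0 : u 0 = 1) (hmono : ∀ k v : ℕ, 0 ≤ (fdiff^[k] u) v) (n : ℕ) :
    IsProbabilityMeasure (appr u n) := by
  constructor
  simp only [appr, Measure.finsetSum_apply, Measure.smul_apply, measure_univ, smul_eq_mul, mul_one]
  rw [← ENNReal.ofReal_sum_of_nonneg fun k _ => wt_nonneg u hmono n k, sum_wt_one u h0]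
  simp

lemma appr_integral (hmono : ∀ k v : ℕ, 0 ≤ (fdiff^[k] u) v) (n v : ℕ) (hn : 0 < n) :
    ∫ x : I, (x : ℝ) ^ v ∂(appr u n) =
      ∑ k ∈ Finset.range (n + 1), wt u n k * ((k : ℝ) / n) ^ v := by
  rw [appr, integral_finsetSum_measure]
  · refine Finset.sum_congr rfl fun k hk => ?_
    have hk : k ≤ n := by simpa [Nat.lt_succ_iff] using hk
    rw [integral_smul_measure, integral_dirac, ENNReal.toReal_ofReal (wt_nonneg u hmono n k),
      smul_eq_mul, Set.projIcc_of_mem]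
    exact ⟨by positivity, (div_le_one (by exact_mod_cast hn)).2 (by exact_mod_cast hk)⟩
  · intro k _
    exact (integrable_dirac (by simp)).smul_measure ENNReal.ofReal_ne_top

lemma appr_tendsto (h0 : u 0 = 1) (hmono : ∀ k v : ℕ, 0 ≤ (fdiff^[k] u) v) (v : ℕ) :
    Tendsto (fun n => ∫ x : I, (x : ℝ) ^ v ∂(appr u n)) atTop (𝓝 (u v)) := by
  have hlim : Tendsto (fun n : ℕ => (v : ℝ) * (v / ((n : ℝ) - v))) atTop (𝓝 0) := by
    have : Tendsto (fun n : ℕ => (n : ℝ) - v) atTop atTop :=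
      tendsto_atTop_add_const_right _ _ tendsto_natCast_atTop_atTop
    simpa using (this.const_div_atTop (v : ℝ)).const_mul (v : ℝ)
  rw [tendsto_iff_dist_tendsto_zero]
  refine squeeze_zero' (Eventually.of_forall fun _ => dist_nonneg) ?_ hlim
  filter_upwards [eventually_gt_atTop v] with n hn
  rw [appr_integral u hmono n v (by omega), dist_comm, Real.dist_eq]
  nth_rw 1 [← sum_wt u n v hn.le]
  rw [← Finset.sum_sub_distrib]
  refine (Finset.abs_sum_le_sum_abs _ _).trans ?_
  calc _ ≤ ∑ k ∈ Finset.range (n + 1), wt u n k * ((v : ℝ) * (v / ((n : ℝ) - v))) := by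
        refine Finset.sum_le_sum fun k hk => ?_
        have hk : k ≤ n := by simpa [Nat.lt_succ_iff] using hk
        rw [← mul_sub, abs_mul, abs_of_nonneg (wt_nonneg u hmono n k)]
        exact mul_le_mul_of_nonneg_left (ratio_bound n k v hk hn v le_rfl) (wt_nonneg u hmono n k)
    _ = _ := by rw [← Finset.sum_mul, sum_wt_one u h0, one_mul]

end

/-- Hausdorff moment problem: a completely monotone sequence with `u 0 = 1` is the
moment sequence of a probability measure on `[0,1]`. -/
theorem stmt9 (u : ℕ → ℝ) (h0 : u 0 = 1)
    (hmono : ∀ k v : ℕ, 0 ≤ (fdiff^[k] u) v) :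
    ∃ μ : Measure ℝ, IsProbabilityMeasure μ ∧ μ (Set.Icc (0 : ℝ) 1)ᶜ = 0 ∧
      ∀ v : ℕ, u v = ∫ x in Set.Icc (0 : ℝ) 1, x ^ v ∂μ := by
  let P : ℕ → ProbabilityMeasure I := fun n => ⟨appr u n, appr_prob u h0 hmono n⟩
  obtain ⟨ν, -, hν⟩ := isCompact_univ.ultrafilter_le_nhds
    ((hyperfilter ℕ).map P) (by simp)
  have hν' : Tendsto P (hyperfilter ℕ : Filter ℕ) (𝓝 ν) := hν
  rw [ProbabilityMeasure.tendsto_iff_forall_integral_tendsto] at hν'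
  have hm : Measurable (Subtype.val : I → ℝ) := measurable_subtype_coe
  have hmom : ∀ v : ℕ, u v = ∫ x : I, (x : ℝ) ^ v ∂(ν : Measure I) := by
    intro v
    have h1 := hν' (BoundedContinuousFunction.mkOfCompact ⟨fun x : I => (x : ℝ) ^ v, by fun_prop⟩)
    have h2 := (appr_tendsto u h0 hmono v).mono_left Nat.hyperfilter_le_atTop
    exact tendsto_nhds_unique h2 h1
  have hz : ((ν : Measure I).map Subtype.val) (Set.Icc (0 : ℝ) 1)ᶜ = 0 := by
    rw [Measure.map_apply hm measurableSet_Icc.compl]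
    convert measure_empty (μ := (ν : Measure I))
    ext x
    simpa using fun _ => x.2.2
  refine ⟨(ν : Measure I).map Subtype.val, Measure.isProbabilityMeasure_map hm.aemeasurable,
    hz, fun v => ?_⟩
  rw [Measure.restrict_eq_self_of_ae_mem (by exact hz), integral_map hm.aemeasurable
    (by fun_prop)]
  exact hmom v
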